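/- Let K be a field of characteristic zero and A₂ the 2-dimensional (non-unital) associative K-algebra with basis {e₁, e₂} and multiplication e₁e₁ = e₂, e₁e₂ = e₂e₁ = e₂e₂ = 0. With the Hochschild differentials dₙ on Cₙ = A₂ ⊗ A₂^{⊗n}, the kernel of d₂ : C₂ → C₁ has dimension 6 and the image of d₃ : C₃ → C₂ has dimension 4; consequently the second Hochschild homology H₂(A₂,A₂) = ker d₂ / im d₃ is nontrivial (of dimension 2). -/

import Mathlib

/-!
Write `x = e₁`, `y = e₂`, so `x x = y` and all other products vanish. On basis tensors
`d₂(xxx) = 2 yx - xy` and `d₂(xxy) = d₂(xyx) = -d₂(yxx) = yy`, and `d₂` kills the rest. Hence, in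
coordinates, `ker d₂` is cut out of the 8-dimensional space `C₂` by the two independent equations
`v_xxx = 0` and `v_xxy + v_xyx - v_yxx = 0`. Likewise `im d₃` is spanned by `xxy - xyx`,
`yxy - xyy`, `yyx - yxy` and `yyy`, so it is cut out by the four independent equations
`w_xxx = 0`, `w_yxx = 0`, `w_xxy + w_xyx = 0` and `w_xyy + w_yxy + w_yyx = 0`.

The proof realises both subspaces as kernels of surjective maps onto `K²` and `K⁴`
(`ker_d2_eq`, `range_d3_eq`) and reads off `8 - 2 = 6` and `8 - 4 = 4` by rank-nullity. The equations
for `ker d₂` follow from those for `im d₃`, so `im d₃ ≤ ker d₂` and the quotient has dimension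
`6 - 4 = 2`.
-/

noncomputable section

variable (K : Type*) [Field K]

/-- Structure constants of the 2-dimensional associative algebra `A₂` with basis
`{e₁, e₂}` (indexed by `0, 1`) and multiplication `e₁e₁ = e₂`, all other products of
basis vectors being `0`: `hmul i j k` is the coefficient of `e_k` in `e_i · e_j`. -/
def hmul : Fin 2 → Fin 2 → Fin 2 → K := fun i j k =>
  if i = 0 ∧ j = 0 ∧ k = 1 then 1 else 0

/-- Kronecker delta. -/
def kd : Fin 2 → Fin 2 → K := fun i j => if i = j then 1 else 0

/-- The Hochschild differential `d₂ : C₂ = A₂ ⊗ A₂ ⊗ A₂ → C₁ = A₂ ⊗ A₂`,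
`d₂(a₀,a₁,a₂) = (a₀a₁,a₂) - (a₀,a₁a₂) + (a₂a₀,a₁)`, in the bases
`e_{i₀} ⊗ e_{i₁} ⊗ e_{i₂}` of `C₂` and `e_{k₀} ⊗ e_{k₁}` of `C₁`. -/
def d2 : ((Fin 2 × Fin 2 × Fin 2) → K) →ₗ[K] ((Fin 2 × Fin 2) → K) :=
  Matrix.toLin' (fun k i =>
    hmul K i.1 i.2.1 k.1 * kd K i.2.2 k.2
      - kd K i.1 k.1 * hmul K i.2.1 i.2.2 k.2
      + hmul K i.2.2 i.1 k.1 * kd K i.2.1 k.2)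

/-- The Hochschild differential `d₃ : C₃ = A₂^{⊗4} → C₂ = A₂^{⊗3}`,
`d₃(a₀,a₁,a₂,a₃) = (a₀a₁,a₂,a₃) - (a₀,a₁a₂,a₃) + (a₀,a₁,a₂a₃) - (a₃a₀,a₁,a₂)`,
in the bases of tensor products of the `e_i`. -/
def d3 : ((Fin 2 × Fin 2 × Fin 2 × Fin 2) → K) →ₗ[K] ((Fin 2 × Fin 2 × Fin 2) → K) :=
  Matrix.toLin' (fun k i =>
    hmul K i.1 i.2.1 k.1 * kd K i.2.2.1 k.2.1 * kd K i.2.2.2 k.2.2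
      - kd K i.1 k.1 * hmul K i.2.1 i.2.2.1 k.2.1 * kd K i.2.2.2 k.2.2
      + kd K i.1 k.1 * kd K i.2.1 k.2.1 * hmul K i.2.2.1 i.2.2.2 k.2.2
      - hmul K i.2.2.2 i.1 k.1 * kd K i.2.1 k.2.1 * kd K i.2.2.1 k.2.2)

lemma d2_eq_sum (v : (Fin 2 × Fin 2 × Fin 2) → K) (k : Fin 2 × Fin 2) :
    d2 K v k = ∑ i : Fin 2 × Fin 2 × Fin 2,
      (hmul K i.1 i.2.1 k.1 * kd K i.2.2 k.2
        - kd K i.1 k.1 * hmul K i.2.1 i.2.2 k.2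
        + hmul K i.2.2 i.1 k.1 * kd K i.2.1 k.2) * v i :=
  congrFun (Matrix.toLin'_apply _ v) k

lemma d2_apply (v : (Fin 2 × Fin 2 × Fin 2) → K) :
    d2 K v (0, 0) = 0 ∧ d2 K v (0, 1) = -v (0, 0, 0) ∧
    d2 K v (1, 0) = v (0, 0, 0) + v (0, 0, 0) ∧
    d2 K v (1, 1) = v (0, 0, 1) + v (0, 1, 0) - v (1, 0, 0) := by
  refine ⟨?_, ?_, ?_, ?_⟩ <;>
    simp [d2_eq_sum, Fintype.sum_prod_type, hmul, kd] <;>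
    ring

lemma d3_eq_sum (v : (Fin 2 × Fin 2 × Fin 2 × Fin 2) → K) (k : Fin 2 × Fin 2 × Fin 2) :
    d3 K v k = ∑ i : Fin 2 × Fin 2 × Fin 2 × Fin 2,
      (hmul K i.1 i.2.1 k.1 * kd K i.2.2.1 k.2.1 * kd K i.2.2.2 k.2.2
        - kd K i.1 k.1 * hmul K i.2.1 i.2.2.1 k.2.1 * kd K i.2.2.2 k.2.2
        + kd K i.1 k.1 * kd K i.2.1 k.2.1 * hmul K i.2.2.1 i.2.2.2 k.2.2
        - hmul K i.2.2.2 i.1 k.1 * kd K i.2.1 k.2.1 * kd K i.2.2.1 k.2.2) * v i :=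
  congrFun (Matrix.toLin'_apply _ v) k

lemma d3_apply (v : (Fin 2 × Fin 2 × Fin 2 × Fin 2) → K) :
    d3 K v (0, 0, 0) = 0 ∧ d3 K v (0, 0, 1) = v (0, 0, 0, 0) ∧
    d3 K v (0, 1, 0) = -v (0, 0, 0, 0) ∧ d3 K v (1, 0, 0) = 0 ∧
    d3 K v (0, 1, 1) = v (0, 1, 0, 0) - v (0, 0, 0, 1) ∧
    d3 K v (1, 0, 1) = v (0, 0, 0, 1) - v (0, 0, 1, 0) + v (1, 0, 0, 0) ∧
    d3 K v (1, 1, 0) = v (0, 0, 1, 0) - v (0, 1, 0, 0) - v (1, 0, 0, 0) ∧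
    d3 K v (1, 1, 1) =
      v (0, 0, 1, 1) - v (1, 0, 0, 1) + v (1, 1, 0, 0) - v (0, 1, 1, 0) := by
  refine ⟨?_, ?_, ?_, ?_, ?_, ?_, ?_, ?_⟩ <;>
    simp [d3_eq_sum, Fintype.sum_prod_type, hmul, kd] <;>
    ring

/-- The two linear forms on `C₂` whose common kernel is `ker d₂`. -/
def cycleForms : ((Fin 2 × Fin 2 × Fin 2) → K) →ₗ[K] K × K where
  toFun v := (v (0, 0, 0), v (0, 0, 1) + v (0, 1, 0) - v (1, 0, 0))
  map_add' v w := by ext <;> simp; ring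
  map_smul' c v := by ext <;> simp; ring

/-- The four linear forms on `C₂` whose common kernel is `im d₃`. -/
def boundaryForms : ((Fin 2 × Fin 2 × Fin 2) → K) →ₗ[K] K × K × K × K where
  toFun w := (w (0, 0, 0), w (1, 0, 0), w (0, 0, 1) + w (0, 1, 0),
    w (0, 1, 1) + w (1, 0, 1) + w (1, 1, 0))
  map_add' v w := by ext <;> simp <;> ring
  map_smul' c v := by ext <;> simp <;> ring

lemma ker_d2_eq : LinearMap.ker (d2 K) = LinearMap.ker (cycleForms K) := by
  ext v
  obtain ⟨h00, h01, h10, h11⟩ := d2_apply K v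
  simp only [LinearMap.mem_ker, cycleForms, LinearMap.coe_mk, AddHom.coe_mk, Prod.mk_eq_zero]
  constructor
  · intro h
    rw [h] at h01 h11
    exact ⟨by simpa using h01.symm, h11.symm⟩
  · rintro ⟨h0, h1⟩
    ext ⟨i, j⟩
    fin_cases i <;> fin_cases j <;> simp [h00, h01, h10, h11, h0, h1]

lemma range_d3_eq : LinearMap.range (d3 K) = LinearMap.ker (boundaryForms K) := by
  ext w
  simp only [LinearMap.mem_range, LinearMap.mem_ker, boundaryForms, LinearMap.coe_mk,
    AddHom.coe_mk, Prod.mk_eq_zero]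
  constructor
  · rintro ⟨v, rfl⟩
    obtain ⟨h000, h001, h010, h100, h011, h101, h110, -⟩ := d3_apply K v
    rw [h000, h001, h010, h100, h011, h101, h110]
    refine ⟨rfl, rfl, ?_, ?_⟩ <;> ring
  · rintro ⟨e0, e1, e2, e3⟩
    -- The preimage `w_xxy xxxx + w_xyy xyxx - w_yxy xxyx + w_yyy xxyy`.
    let v : (Fin 2 × Fin 2 × Fin 2 × Fin 2) → K := fun i =>
      if i = (0, 0, 0, 0) then w (0, 0, 1) else
      if i = (0, 1, 0, 0) then w (0, 1, 1) else
      if i = (0, 0, 1, 0) then -w (1, 0, 1) else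
      if i = (0, 0, 1, 1) then w (1, 1, 1) else 0
    refine ⟨v, ?_⟩
    obtain ⟨h000, h001, h010, h100, h011, h101, h110, h111⟩ := d3_apply K v
    ext ⟨i, j, k⟩
    fin_cases i <;> fin_cases j <;> fin_cases k <;>
      simp [h000, h001, h010, h100, h011, h101, h110, h111, v, e0, e1]
    · linear_combination -e2
    · linear_combination -e3

lemma cycleForms_surjective : Function.Surjective (cycleForms K) := by
  rintro ⟨a, b⟩
  refine ⟨fun i => if i = (0, 0, 0) then a else if i = (0, 0, 1) then b else 0, ?_⟩
  simp [cycleForms]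

lemma boundaryForms_surjective : Function.Surjective (boundaryForms K) := by
  rintro ⟨a, b, c, d⟩
  refine ⟨fun i => if i = (0, 0, 0) then a else if i = (1, 0, 0) then b else
    if i = (0, 0, 1) then c else if i = (0, 1, 1) then d else 0, ?_⟩
  simp [boundaryForms]

lemma finrank_ker_d2 : Module.finrank K (LinearMap.ker (d2 K)) = 6 := by
  have h := (cycleForms K).finrank_range_add_finrank_ker
  rw [LinearMap.range_eq_top.2 (cycleForms_surjective K), finrank_top] at h
  simp only [Module.finrank_prod, Module.finrank_self, Module.finrank_fintype_fun_eq_card,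
    Fintype.card_prod, Fintype.card_fin] at h
  rw [ker_d2_eq]
  lia

lemma finrank_range_d3 : Module.finrank K (LinearMap.range (d3 K)) = 4 := by
  have h := (boundaryForms K).finrank_range_add_finrank_ker
  rw [LinearMap.range_eq_top.2 (boundaryForms_surjective K), finrank_top] at h
  simp only [Module.finrank_prod, Module.finrank_self, Module.finrank_fintype_fun_eq_card,
    Fintype.card_prod, Fintype.card_fin] at h
  rw [range_d3_eq]
  lia

lemma range_d3_le_ker_d2 : LinearMap.range (d3 K) ≤ LinearMap.ker (d2 K) := by
  rw [range_d3_eq, ker_d2_eq]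
  intro w hw
  simp only [LinearMap.mem_ker, boundaryForms, cycleForms, LinearMap.coe_mk, AddHom.coe_mk,
    Prod.mk_eq_zero] at hw ⊢
  obtain ⟨e0, e1, e2, -⟩ := hw
  exact ⟨e0, by linear_combination e2 - e1⟩

/-- For the 2-dimensional algebra `A₂` (with `e₁e₁ = e₂` and all other
basis products zero), `dim ker d₂ = 6`, `dim im d₃ = 4`, and so the second Hochschild
homology `H₂(A₂,A₂) = ker d₂ / im d₃` is nontrivial, of dimension 2. -/
theorem hochschild_H2_of_A2 [CharZero K] :
    Module.finrank K (LinearMap.ker (d2 K)) = 6 ∧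
    Module.finrank K (LinearMap.range (d3 K)) = 4 ∧
    Module.finrank K
      (LinearMap.ker (d2 K) ⧸
        (LinearMap.range (d3 K)).comap (LinearMap.ker (d2 K)).subtype) = 2 ∧
    Nontrivial
      (LinearMap.ker (d2 K) ⧸
        (LinearMap.range (d3 K)).comap (LinearMap.ker (d2 K)).subtype) := by
  have hquot : Module.finrank K
      (LinearMap.ker (d2 K) ⧸
        (LinearMap.range (d3 K)).comap (LinearMap.ker (d2 K)).subtype) = 2 := by
    have h := Submodule.finrank_quotient_add_finrank
      ((LinearMap.range (d3 K)).comap (LinearMap.ker (d2 K)).subtype)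
    rw [(Submodule.comapSubtypeEquivOfLe (range_d3_le_ker_d2 K)).finrank_eq,
      finrank_range_d3, finrank_ker_d2] at h
    lia
  exact ⟨finrank_ker_d2 K, finrank_range_d3 K, hquot,
    Module.nontrivial_of_finrank_pos (R := K) (by rw [hquot]; norm_num)⟩

end
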